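/- arXiv:1910.07275 — 5 statements merged into one kernel-verified Lean document; each statement's English description precedes it below -/
import Mathlib

section
/- In any relativized Boolean algebra, if 1_X ≥ 1_Y then X ∧ 1_Y belongs to π₁(Y), i.e. 1_{X ∧ 1_Y} = 1_Y (equivalently (X ∧ 1_Y) ∨ ¬(X ∧ 1_Y) = Y ∨ ¬Y). -/
structure RBA (α : Type*) where
  meet : α → α → α
  join : α → α → α
  compl : α → α
  bot : α
  top : α
  meet_assoc : ∀ x y z, meet (meet x y) z = meet x (meet y z)
  meet_comm : ∀ x y, meet x y = meet y x
  join_assoc : ∀ x y z, join (join x y) z = join x (join y z)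
  join_comm : ∀ x y, join x y = join y x
  meet_distrib : ∀ x y z, meet x (join y z) = join (meet x y) (meet x z)
  join_distrib : ∀ x y z, join x (meet y z) = meet (join x y) (join x z)
  demorgan_meet : ∀ x y, compl (meet x y) = join (compl x) (compl y)
  demorgan_join : ∀ x y, compl (join x y) = meet (compl x) (compl y)
  meet_idem : ∀ x, meet x x = x
  join_idem : ∀ x, join x x = x
  meet_top : ∀ x, meet x top = x
  compl_compl : ∀ x, compl (compl x) = x
  join_top : ∀ x, join x top = join x (compl x)
  meet_bot : ∀ x, meet x bot = bot
  rb5 : ∀ x y,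
    meet (join x (compl x)) (join y (compl y)) = join x (compl x) →
    compl (meet y (join x (compl x))) = meet (compl y) (join x (compl x))

namespace RBA
variable {α : Type*}

/-- `1_X := X ∨ ¬X` -/
def one (R : RBA α) (x : α) : α := R.join x (R.compl x)

/-- `0_X := X ∧ ¬X` -/
def zero (R : RBA α) (x : α) : α := R.meet x (R.compl x)

/-- `ge R y x` means `y ≥ x`, i.e. `x ∧ y = x`. -/
def ge (R : RBA α) (y x : α) : Prop := R.meet x y = x

end RBA

/-- If `1_X ≥ 1_Y` then `X ∧ 1_Y ∈ π₁(Y)`, i.e. `1_{X ∧ 1_Y} = 1_Y`. -/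
theorem stmt3 {α : Type*} (R : RBA α) (x y : α)
    (h : R.ge (R.one x) (R.one y)) :
    R.one (R.meet x (R.one y)) = R.one y := by
  -- `¬(X ∧ 1_Y) = ¬X ∧ 1_Y` by (rb5), so by distributivity `1_{X ∧ 1_Y} = 1_X ∧ 1_Y = 1_Y`.
  have hc : R.compl (R.meet x (R.one y)) = R.meet (R.compl x) (R.one y) := R.rb5 y x h
  calc R.one (R.meet x (R.one y))
      = R.join (R.meet x (R.one y)) (R.meet (R.compl x) (R.one y)) := by
        rw [← hc]; rfl
    _ = R.meet (R.one y) (R.one x) := by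
        rw [R.meet_comm x, R.meet_comm (R.compl x), ← R.meet_distrib]; rfl
    _ = R.one y := h
end

section
/- In any relativized Boolean algebra, for all X and Y: 1_X ∧ 1_Y = 1_{X∧Y} = 1_{X∨Y} = 1_X ∨ 1_Y. -/
namespace RBA

theorem one_eq {α : Type*} (R : RBA α) (x : α) : R.one x = R.join x R.top :=
  (R.join_top x).symm

theorem one_compl {α : Type*} (R : RBA α) (x : α) : R.one (R.compl x) = R.one x := by
  rw [one, one, R.compl_compl, R.join_comm]

theorem one_join {α : Type*} (R : RBA α) (x y : α) :
    R.one (R.join x y) = R.join (R.one x) (R.one y) := by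
  rw [R.one_eq, R.one_eq, R.one_eq, R.join_assoc x R.top, ← R.join_assoc R.top y,
    R.join_comm R.top y, R.join_assoc y, R.join_idem, R.join_assoc]

end RBA

/-- `1_X ∧ 1_Y = 1_{X∧Y} = 1_{X∨Y} = 1_X ∨ 1_Y`. -/
theorem stmt4 {α : Type*} (R : RBA α) (x y : α) :
    R.meet (R.one x) (R.one y) = R.one (R.meet x y) ∧
    R.one (R.meet x y) = R.one (R.join x y) ∧
    R.one (R.join x y) = R.join (R.one x) (R.one y) := by
  have join_one : R.one (R.join x y) = R.join (R.one x) (R.one y) :=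
    R.one_join x y
  -- `1_X = 1_{¬X}`, so De Morgan reduces the meet case to the join case.
  have meet_one : R.one (R.meet x y) = R.join (R.one x) (R.one y) := by
    rw [← R.one_compl (R.meet x y), R.demorgan_meet, R.one_join, R.one_compl, R.one_compl]
  refine ⟨?_, meet_one.trans join_one.symm, join_one⟩
  rw [R.one_eq, R.one_eq, R.one_eq, R.join_comm x, R.join_comm y, R.join_comm (R.meet x y),
    R.join_distrib]
end

section
/- In any relativized Boolean algebra, for each X, the map h_X : Y ↦ Y ∧ 1_X is a homomorphism from the set {Y : 1_Y ≥ 1_X} (with the inherited operations, top element 1 and bottom element 0_X) onto π₁(X): its image lies in π₁(X), h_X(1) = 1_X, and for all Y, Z with 1_Y ≥ 1_X and 1_Z ≥ 1_X one has h_X(¬Y) = ¬h_X(Y), h_X(Y ∧ Z) = h_X(Y) ∧ h_X(Z), and h_X(Y ∨ Z) = h_X(Y) ∨ h_X(Z). -/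
/-- The map `h_X : Y ↦ Y ∧ 1_X` is a homomorphism from `{Y : 1_Y ≥ 1_X}` onto `π₁(X)`:
its image lies in `π₁(X)`, `h_X(1) = 1_X`, and it commutes with `¬`, `∧`, `∨`. -/
theorem stmt6 {α : Type*} (R : RBA α) (x : α) :
    (∀ y, R.ge (R.one y) (R.one x) → R.one (R.meet y (R.one x)) = R.one x) ∧
    (R.meet R.top (R.one x) = R.one x) ∧
    (∀ y, R.ge (R.one y) (R.one x) →
      R.meet (R.compl y) (R.one x) = R.compl (R.meet y (R.one x))) ∧
    (∀ y z, R.ge (R.one y) (R.one x) → R.ge (R.one z) (R.one x) →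
      R.meet (R.meet y z) (R.one x) = R.meet (R.meet y (R.one x)) (R.meet z (R.one x))) ∧
    (∀ y z, R.ge (R.one y) (R.one x) → R.ge (R.one z) (R.one x) →
      R.meet (R.join y z) (R.one x) = R.join (R.meet y (R.one x)) (R.meet z (R.one x))) := by
  -- Complements: this is `rb5`, with `one` and `ge` unfolded.
  have hcompl : ∀ y, R.ge (R.one y) (R.one x) →
      R.meet (R.compl y) (R.one x) = R.compl (R.meet y (R.one x)) :=
    fun y hy => (R.rb5 x y hy).symm
  have hdistrib : ∀ y z e, R.meet (R.join y z) e = R.join (R.meet y e) (R.meet z e) := by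
    intro y z e
    rw [R.meet_comm, R.meet_distrib, R.meet_comm e y, R.meet_comm e z]
  refine ⟨fun y hy => ?_, ?_, hcompl, fun y z _ _ => ?_, fun y z _ _ => hdistrib y z _⟩
  -- `(Y ∧ 1_X) ∨ ¬(Y ∧ 1_X) = (Y ∨ ¬Y) ∧ 1_X = 1_Y ∧ 1_X = 1_X`
  · calc R.one (R.meet y (R.one x))
        = R.join (R.meet y (R.one x)) (R.compl (R.meet y (R.one x))) := rfl
      _ = R.meet (R.one y) (R.one x) := by rw [← hcompl y hy, ← hdistrib]; rfl
      _ = R.one x := by rw [R.meet_comm]; exact hy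
  · rw [R.meet_comm, R.meet_top]
  · generalize R.one x = e
    calc R.meet (R.meet y z) e
        = R.meet y (R.meet z (R.meet e e)) := by rw [R.meet_idem, R.meet_assoc]
      _ = R.meet y (R.meet e (R.meet z e)) := by
          rw [← R.meet_assoc z e e, R.meet_comm (R.meet z e) e]
      _ = R.meet (R.meet y e) (R.meet z e) := (R.meet_assoc y e _).symm
end

section
/- For any set W, the concrete algebra 2W on the set {(A,B) : A ⊆ B ⊆ W}, with ¬(A,B) = (B∖A, B), (A,B) ∧ (A',B') = (A∩A', B∩B'), (A,B) ∨ (A',B') = ((A∪A')∩(B∩B'), B∩B'), bottom element (∅,∅) and top element (W,W), is a relativized Boolean algebra; moreover 1_{(A,B)} = (B,B), 0_{(A,B)} = (∅,B), and (A,B) ≥ (A',B') iff A ⊇ A' and B ⊇ B'. -/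
/-- Elements of the concrete relativized Boolean algebra on `W`: pairs `(A,B)` with `A ⊆ B ⊆ W`. -/
abbrev CP (W : Type*) := {p : Set W × Set W // p.1 ⊆ p.2}

namespace CP
variable {W : Type*}

def neg (p : CP W) : CP W := ⟨(p.1.2 \ p.1.1, p.1.2), Set.diff_subset⟩

def meet (p q : CP W) : CP W :=
  ⟨(p.1.1 ∩ q.1.1, p.1.2 ∩ q.1.2), Set.inter_subset_inter p.2 q.2⟩

def join (p q : CP W) : CP W :=
  ⟨((p.1.1 ∪ q.1.1) ∩ (p.1.2 ∩ q.1.2), p.1.2 ∩ q.1.2), Set.inter_subset_right⟩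

def bot : CP W := ⟨(∅, ∅), subset_rfl⟩

def top : CP W := ⟨(Set.univ, Set.univ), subset_rfl⟩

/-- `1_X := X ∨ ¬X` computed with the concrete operations. -/
def one (p : CP W) : CP W := join p (neg p)

end CP

/-- Two pairs agree iff their components have the same points, so an identity between terms in
`CP.meet`, `CP.join`, `CP.neg` becomes, at each point of `W`, a propositional one. -/
theorem CP.ext_mem {W : Type*} {p q : CP W}
    (h : ∀ w, (w ∈ p.1.1 ↔ w ∈ q.1.1) ∧ (w ∈ p.1.2 ↔ w ∈ q.1.2)) : p = q :=
  Subtype.ext (Prod.ext (Set.ext fun w => (h w).1) (Set.ext fun w => (h w).2))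

/-- `1_{(A,B)} = (B,B)`, at the level of the concrete operations. -/
theorem CP.join_neg {W : Type*} (p : CP W) :
    CP.join p (CP.neg p) = ⟨(p.1.2, p.1.2), subset_rfl⟩ := by
  refine CP.ext_mem fun w => ?_
  have hp := @p.2 w
  simp only [CP.join, CP.neg, Set.mem_inter_iff, Set.mem_union, Set.mem_sdiff]
  tauto

/-- The concrete algebra `2W` on `{(A,B) : A ⊆ B ⊆ W}` with the given operations is a
relativized Boolean algebra; moreover `1_{(A,B)} = (B,B)`, `0_{(A,B)} = (∅,B)`, and
`(A,B) ≥ (A',B')` iff `A ⊇ A'` and `B ⊇ B'`. -/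
theorem stmt7 (W : Type*) :
    ∃ R : RBA (CP W),
      R.meet = CP.meet ∧ R.join = CP.join ∧ R.compl = CP.neg ∧
      R.bot = CP.bot ∧ R.top = CP.top ∧
      (∀ p : CP W, R.one p = ⟨(p.1.2, p.1.2), subset_rfl⟩) ∧
      (∀ p : CP W, R.zero p = ⟨(∅, p.1.2), Set.empty_subset _⟩) ∧
      (∀ p q : CP W, R.ge p q ↔ q.1.1 ⊆ p.1.1 ∧ q.1.2 ⊆ p.1.2) := by
  refine ⟨{
    meet := CP.meet
    join := CP.join
    compl := CP.neg
    bot := CP.bot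
    top := CP.top
    meet_assoc := fun x y z => CP.ext_mem fun w => by
      simp only [CP.meet, Set.mem_inter_iff]
      tauto
    meet_comm := fun x y => CP.ext_mem fun w => by
      simp only [CP.meet, Set.mem_inter_iff]
      tauto
    join_assoc := fun x y z => CP.ext_mem fun w => by
      simp only [CP.join, Set.mem_inter_iff, Set.mem_union]
      tauto
    join_comm := fun x y => CP.ext_mem fun w => by
      simp only [CP.join, Set.mem_inter_iff, Set.mem_union]
      tauto
    meet_distrib := fun x y z => CP.ext_mem fun w => by
      have hx := @x.2 w
      have hy := @y.2 w
      have hz := @z.2 w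
      simp only [CP.meet, CP.join, Set.mem_inter_iff, Set.mem_union]
      tauto
    join_distrib := fun x y z => CP.ext_mem fun w => by
      have hx := @x.2 w
      have hy := @y.2 w
      have hz := @z.2 w
      simp only [CP.meet, CP.join, Set.mem_inter_iff, Set.mem_union]
      tauto
    demorgan_meet := fun x y => CP.ext_mem fun w => by
      have hx := @x.2 w
      have hy := @y.2 w
      simp only [CP.meet, CP.join, CP.neg, Set.mem_inter_iff, Set.mem_union, Set.mem_sdiff]
      tauto
    demorgan_join := fun x y => CP.ext_mem fun w => by
      have hx := @x.2 w
      have hy := @y.2 w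
      simp only [CP.meet, CP.join, CP.neg, Set.mem_inter_iff, Set.mem_union, Set.mem_sdiff]
      tauto
    meet_idem := fun x => CP.ext_mem fun w => by
      simp only [CP.meet, Set.mem_inter_iff]
      tauto
    join_idem := fun x => CP.ext_mem fun w => by
      have hx := @x.2 w
      simp only [CP.join, Set.mem_inter_iff, Set.mem_union]
      tauto
    meet_top := fun x => CP.ext_mem fun w => by
      simp only [CP.meet, CP.top, Set.mem_inter_iff, Set.mem_univ]
      tauto
    compl_compl := fun x => CP.ext_mem fun w => by
      have hx := @x.2 w
      simp only [CP.neg, Set.mem_sdiff]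
      tauto
    join_top := fun x => CP.ext_mem fun w => by
      have hx := @x.2 w
      simp only [CP.join, CP.neg, CP.top, Set.mem_inter_iff, Set.mem_union, Set.mem_sdiff,
        Set.mem_univ]
      tauto
    meet_bot := fun x => CP.ext_mem fun w => by
      simp only [CP.meet, CP.bot, Set.mem_inter_iff, Set.mem_empty_iff_false]
      tauto
    rb5 := fun x y h => by
      rw [CP.join_neg, CP.join_neg] at h
      rw [CP.join_neg]
      -- The hypothesis says that the second component of `x` lies in that of `y`.
      have hB : x.1.2 ∩ y.1.2 = x.1.2 := congrArg (fun p : CP W => p.1.2) h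
      refine CP.ext_mem fun w => ?_
      have hw : w ∈ x.1.2 → w ∈ y.1.2 := fun hx => Set.inter_eq_left.mp hB hx
      simp only [CP.meet, CP.neg, Set.mem_inter_iff, Set.mem_sdiff]
      tauto }, rfl, rfl, rfl, rfl, rfl, CP.join_neg, fun p => ?_, fun p q => ?_⟩
  · refine CP.ext_mem fun w => ?_
    simp only [RBA.zero, CP.meet, CP.neg, Set.mem_inter_iff, Set.mem_sdiff,
      Set.mem_empty_iff_false]
    tauto
  · simp only [RBA.ge, CP.meet, Subtype.ext_iff, Prod.ext_iff, Set.inter_eq_left]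
end

section
/- Let M = (W, ≥, R, L, V) be an awareness model and let h^M : ℒ(ℙ) → 2W be the homomorphism determined by h^M(p) = (V(p), L(p)), extended to h^{M+} on ℒ^{A,K}(ℙ) by h^{M+}(Kφ) = f^{K,R}(h^{M+}(φ)) and h^{M+}(Aφ) = f^{K,R}(1_{h^{M+}(φ)}). Then for every formula φ ∈ ℒ^{A,K}(ℙ), h^{M+}(φ) = (V(φ), L(φ)). -/
/-!
The proof is by induction on `φ`. Each operation of the concrete algebra mirrors a truth clause
restricted to the worlds where the formula is defined. The only case needing more than unfolding is
`Aφ`: since `1_(A,B) = (B,B)` (`CP.one_val`), the operator `f^{K,R}` applied to `1_{h(φ)}` picks out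
the worlds in `L(φ)` all of whose successors lie in `L(φ)`.
-/

/-- The language `ℒ^{A,K}(ℙ)`: `φ ::= p | 1 | ¬φ | (φ∧φ) | Aφ | Kφ`. -/
inductive AKForm (P : Type*) : Type _ where
  | var : P → AKForm P
  | one : AKForm P
  | neg : AKForm P → AKForm P
  | conj : AKForm P → AKForm P → AKForm P
  | aw : AKForm P → AKForm P
  | kn : AKForm P → AKForm P

namespace AKForm
variable {P : Type*}

/-- The propositional variables occurring in a formula. -/
def vars : AKForm P → Set P
  | .var p => {p}
  | .one => ∅
  | .neg φ => φ.vars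
  | .conj φ ψ => φ.vars ∪ ψ.vars
  | .aw φ => φ.vars
  | .kn φ => φ.vars

end AKForm

/-- An awareness model: a preorder `ge` (`ge w w'` meaning `w ≥ w'`), a serial
accessibility relation `Rel`, and valuations `L`, `V` with `L p` upward closed and
`V p ⊆ L p`. -/
structure AwModel (W P : Type*) where
  ge : W → W → Prop
  ge_refl : ∀ w, ge w w
  ge_trans : ∀ a b c, ge a b → ge b c → ge a c
  Rel : W → W → Prop
  serial : ∀ w, ∃ w', Rel w w'
  L : P → Set W
  V : P → Set W
  L_up : ∀ p w w', w ∈ L p → ge w' w → w' ∈ L p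
  V_sub : ∀ p, V p ⊆ L p

variable {W P : Type*}

/-- `φ ∈ ℒ^{A,K}(ω)`: every propositional variable of `φ` is in the language at `ω`. -/
def AwModel.Defined (M : AwModel W P) (ω : W) (φ : AKForm P) : Prop :=
  ∀ p ∈ φ.vars, ω ∈ M.L p

/-- Truth at a world: `⟨M,ω⟩ ⊨ φ`. -/
def AwModel.Sat (M : AwModel W P) : AKForm P → W → Prop
  | .var p, ω => ω ∈ M.V p
  | .one, _ => True
  | .neg φ, ω => ¬ M.Sat φ ω
  | .conj φ ψ, ω => M.Sat φ ω ∧ M.Sat ψ ω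
  | .aw φ, ω => ∀ ω', M.Rel ω ω' → M.Defined ω' φ
  | .kn φ, ω => ∀ ω', M.Rel ω ω' → M.Defined ω' φ ∧ M.Sat φ ω'

/-- `V(φ)`: the worlds in which `φ` is (defined and) true. -/
def AwModel.Vset (M : AwModel W P) (φ : AKForm P) : Set W :=
  {ω | M.Defined ω φ ∧ M.Sat φ ω}

/-- `L(φ)`: the worlds in which `φ` is defined. -/
def AwModel.Lset (M : AwModel W P) (φ : AKForm P) : Set W :=
  {ω | M.Defined ω φ}

/-- The operator `f^{K,R}(A,B) = ({ω : R(ω) ⊆ A} ∩ B, B)` on the concrete RBA `2W`. -/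
def fKR {W : Type*} (Rel : W → W → Prop) (p : CP W) : CP W :=
  ⟨({ω | ∀ ω', Rel ω ω' → ω' ∈ p.1.1} ∩ p.1.2, p.1.2), Set.inter_subset_right⟩

/-- The homomorphism `h^M : ℒ(ℙ) → 2W` with `h^M(p) = (V(p), L(p))`, extended by
`h^{M+}(Kφ) = f^{K,R}(h^{M+}(φ))` and `h^{M+}(Aφ) = f^{K,R}(1_{h^{M+}(φ)})`. -/
def hM {W P : Type*} (M : AwModel W P) : AKForm P → CP W
  | .var p => ⟨(M.V p, M.L p), M.V_sub p⟩
  | .one => CP.top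
  | .neg φ => CP.neg (hM M φ)
  | .conj φ ψ => CP.meet (hM M φ) (hM M ψ)
  | .kn φ => fKR M.Rel (hM M φ)
  | .aw φ => fKR M.Rel (CP.one (hM M φ))

/-- The local top `1_(A,B) = (A,B) ∨ ¬(A,B)` is `(B,B)`; this is why `f^{K,R}(1_X)` tests only
whether the language component holds at all accessible worlds. -/
theorem CP.one_val {W : Type*} (p : CP W) : (CP.one p).1 = (p.1.2, p.1.2) := by
  simp [CP.one, CP.join, CP.neg, Set.union_eq_self_of_subset_left p.2]

/-- For every formula `φ ∈ ℒ^{A,K}(ℙ)`, `h^{M+}(φ) = (V(φ), L(φ))`. -/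
theorem stmt13 {W P : Type*} (M : AwModel W P) (φ : AKForm P) :
    (hM M φ).1.1 = M.Vset φ ∧ (hM M φ).1.2 = M.Lset φ := by
  induction φ with
  | var p =>
    constructor <;> ext ω
    · simpa [hM, AwModel.Vset, AwModel.Defined, AwModel.Sat, AKForm.vars] using
        fun h => M.V_sub p h
    · simp [hM, AwModel.Lset, AwModel.Defined, AKForm.vars]
  | one =>
    constructor <;> ext ω <;>
      simp [hM, CP.top, AwModel.Vset, AwModel.Lset, AwModel.Defined, AwModel.Sat, AKForm.vars]
  | neg φ ih =>
    refine ⟨?_, ih.2⟩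
    ext ω
    change (ω ∈ (hM M φ).1.2 ∧ ω ∉ (hM M φ).1.1) ↔ (M.Defined ω φ ∧ ¬ M.Sat φ ω)
    rw [ih.1, ih.2]
    change (M.Defined ω φ ∧ ¬ (M.Defined ω φ ∧ M.Sat φ ω)) ↔ _
    tauto
  | conj φ ψ ih₁ ih₂ =>
    have hdef : ∀ ω, M.Defined ω (φ.conj ψ) ↔ M.Defined ω φ ∧ M.Defined ω ψ := fun ω => by
      simp only [AwModel.Defined, AKForm.vars, Set.mem_union, or_imp, forall_and]
    constructor <;> ext ω
    · change (ω ∈ (hM M φ).1.1 ∧ ω ∈ (hM M ψ).1.1) ↔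
        (M.Defined ω (φ.conj ψ) ∧ M.Sat φ ω ∧ M.Sat ψ ω)
      rw [ih₁.1, ih₂.1, hdef]
      change ((M.Defined ω φ ∧ M.Sat φ ω) ∧ (M.Defined ω ψ ∧ M.Sat ψ ω)) ↔ _
      tauto
    · change (ω ∈ (hM M φ).1.2 ∧ ω ∈ (hM M ψ).1.2) ↔ M.Defined ω (φ.conj ψ)
      rw [ih₁.2, ih₂.2, hdef]
      rfl
  | aw φ ih =>
    have hone : (hM M (.aw φ)).1 =
        ({ω | ∀ ω', M.Rel ω ω' → ω' ∈ (hM M φ).1.2} ∩ (hM M φ).1.2, (hM M φ).1.2) := by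
      simp only [hM, fKR, CP.one_val]
    rw [hone]
    refine ⟨?_, ih.2⟩
    rw [ih.2]
    exact Set.inter_comm _ _
  | kn φ ih =>
    refine ⟨?_, ih.2⟩
    change {ω | ∀ ω', M.Rel ω ω' → ω' ∈ (hM M φ).1.1} ∩ (hM M φ).1.2 = _
    rw [ih.1, ih.2]
    exact Set.inter_comm _ _
end
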